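/- Suppose b ∈ C^1(ℝ^d; ℝ^d) (bounded with bounded continuous derivative ∇b), x₀^n = x₀ for all n, and the driving path t ↦ B_t is almost surely continuously differentiable with derivative B′ that is ε′-Hölder continuous for some ε′ > 0, and suppose X^n_t → X_t almost surely uniformly on [0,1] as n → ∞. Then for every t ∈ [0,1], the limit c(t) := lim_{n→∞} n (X_t − X^n_t) exists almost surely, and c satisfies the linear ODE c′(t) = ∇b(X_t) c(t) + (1/2) ∇b(X_t) ( b(X_t) + B′_t ) with c(0) = 0. -/

import Mathlib

open MeasureTheory ProbabilityTheory Filter Set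

noncomputable section

/-- `ℝ^d` as Euclidean space. -/
abbrev Euc (d : ℕ) := EuclideanSpace ℝ (Fin d)

/-- The grid point `k_n(t) = ⌊nt⌋/n`. -/
def kn (n : ℕ) (t : ℝ) : ℝ := ⌊(n : ℝ) * t⌋ / n

end


/-!
Let `Yⁿ = n (X - Xⁿ)`. Inserting `b(X_{k_n(r)})` splits `Yⁿ_t` into
`n ∫₀ᵗ (b(X_r) - b(X_{k_n(r)})) dr` and `∫₀ᵗ n (b(X_{k_n(r)}) - b(Xⁿ_{k_n(r)})) dr`.
As `b ∘ X` is `C¹`, the first term is the scaled defect of a left-endpoint rule, which converges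
uniformly to `(b(X_t) - b(X_0)) / 2`. A discrete Grönwall argument gives `Xⁿ - X = O(1/n)`, so
linearizing `b` along `X` turns the second term into `∫₀ᵗ ∇b(X_r) Yⁿ_r dr + o(1)`. Thus `Yⁿ` solves
a linear Volterra equation up to a uniformly small error; by Grönwall it is uniformly Cauchy, and
its limit satisfies `c(t) = (b(X_t) - b(X_0)) / 2 + ∫₀ᵗ ∇b(X_r) c(r) dr`, which is the
integrated form of the differential equation.
-/

open scoped Topology

section Grid

variable {n : ℕ} {t : ℝ}

lemma kn_nonneg (n : ℕ) (ht : 0 ≤ t) : 0 ≤ kn n t :=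
  div_nonneg (mod_cast Int.floor_nonneg.2 (by positivity)) n.cast_nonneg

lemma kn_le (hn : 0 < n) (t : ℝ) : kn n t ≤ t := by
  rw [kn, div_le_iff₀ (by positivity), mul_comm t]
  exact Int.floor_le _

lemma abs_sub_kn_le (hn : 0 < n) (t : ℝ) : |t - kn n t| ≤ 1 / n := by
  rw [abs_of_nonneg (sub_nonneg.2 (kn_le hn t)), kn, sub_le_iff_le_add, ← add_div,
    le_div_iff₀ (by positivity), mul_comm t, add_comm]
  exact (Int.lt_floor_add_one _).le

lemma kn_mem_Icc {T : ℝ} (hn : 0 < n) (ht : t ∈ Icc 0 T) : kn n t ∈ Icc 0 T :=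
  ⟨kn_nonneg n ht.1, (kn_le hn t).trans ht.2⟩

lemma kn_kn (hn : 0 < n) (t : ℝ) : kn n (kn n t) = kn n t := by
  have hn' : (n : ℝ) ≠ 0 := by positivity
  simp only [kn, mul_div_cancel₀ _ hn', Int.floor_intCast]

lemma kn_eq_of_mem_Ico {j : ℕ} (hn : 0 < n) (ht : t ∈ Ico ((j : ℝ) / n) ((j + 1) / n)) :
    kn n t = j / n := by
  have hn' : (0 : ℝ) < n := mod_cast hn
  have hfloor : ⌊(n : ℝ) * t⌋ = (j : ℤ) := by
    rw [Int.floor_eq_iff, mul_comm, Int.cast_natCast]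
    exact ⟨(div_le_iff₀ hn').1 ht.1, (lt_div_iff₀ hn').1 ht.2⟩
  rw [kn, hfloor, Int.cast_natCast]

lemma exists_mem_Ico_div (hn : 0 < n) (ht : 0 ≤ t) :
    ∃ j : ℕ, t ∈ Ico ((j : ℝ) / n) ((j + 1) / n) := by
  have hn' : (0 : ℝ) < n := mod_cast hn
  refine ⟨⌊t * n⌋₊, ?_, ?_⟩
  · rw [div_le_iff₀ hn']
    exact Nat.floor_le (by positivity)
  · rw [lt_div_iff₀ hn']
    exact Nat.lt_floor_add_one _

end Grid

section Calculus

variable {E : Type*} [NormedAddCommGroup E]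

lemma intervalIntegrable_of_continuousOn_Icc {f : ℝ → E} {a b x y : ℝ}
    (hf : ContinuousOn f (Icc a b)) (hx : x ∈ Icc a b) (hy : y ∈ Icc a b) :
    IntervalIntegrable f volume x y :=
  (hf.mono (uIcc_subset_Icc hx hy)).intervalIntegrable

lemma intervalIntegrable_comp_kn (f : ℝ → E) (n : ℕ) (a b : ℝ) :
    IntervalIntegrable (fun r => f (kn n r)) volume a b := by
  have hmeas : StronglyMeasurable fun r => f (kn n r) :=
    (StronglyMeasurable.of_discrete (f := fun k : ℤ => f (k / n))).comp_measurable
      (Int.measurable_floor.comp (measurable_const_mul (n : ℝ)))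
  have hfinite : ((fun r => ⌊(n : ℝ) * r⌋) '' uIcc a b).Finite :=
    (Set.finite_Icc ⌊(n : ℝ) * min a b⌋ ⌊(n : ℝ) * max a b⌋).subset <| by
      rintro _ ⟨r, hr, rfl⟩
      exact ⟨Int.floor_mono (mul_le_mul_of_nonneg_left hr.1 n.cast_nonneg),
        Int.floor_mono (mul_le_mul_of_nonneg_left hr.2 n.cast_nonneg)⟩
  obtain ⟨C, hC⟩ := (hfinite.image fun k : ℤ => ‖f (k / n)‖).bddAbove
  refine intervalIntegrable_iff.2 <| Measure.integrableOn_of_bounded (M := C)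
    (by simp) hmeas.aestronglyMeasurable ?_
  refine (ae_restrict_iff' measurableSet_uIoc).2 (Eventually.of_forall fun r hr => hC ?_)
  exact ⟨_, ⟨r, uIoc_subset_uIcc hr, rfl⟩, rfl⟩

lemma continuousOn_of_norm_sub_le_rpow {f : ℝ → E} {s : Set ℝ} {C ε : ℝ} (hε : 0 < ε)
    (hf : ∀ x ∈ s, ∀ y ∈ s, ‖f y - f x‖ ≤ C * |y - x| ^ ε) : ContinuousOn f s := by
  intro x hx
  have hlim : Tendsto (fun y => C * |y - x| ^ ε) (𝓝[s] x) (𝓝 0) := by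
    have hcont : Continuous fun y => C * |y - x| ^ ε :=
      continuous_const.mul ((continuous_sub_right x).abs.rpow_const fun _ => Or.inr hε.le)
    simpa [Real.zero_rpow hε.ne'] using (hcont.tendsto x).mono_left nhdsWithin_le_nhds
  refine tendsto_iff_norm_sub_tendsto_zero.2
    (squeeze_zero' (Eventually.of_forall fun _ => norm_nonneg _) ?_ hlim)
  filter_upwards [self_mem_nhdsWithin] with y hy using hf x hx y hy

lemma eventually_norm_sub_le_of_abs_sub_le_one_div {f : ℝ → E} {s : Set ℝ} (hs : IsCompact s)
    (hf : ContinuousOn f s) {ε : ℝ} (hε : 0 < ε) :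
    ∀ᶠ n : ℕ in atTop, ∀ x ∈ s, ∀ y ∈ s, |x - y| ≤ 1 / n → ‖f x - f y‖ ≤ ε := by
  obtain ⟨δ, hδ, hfδ⟩ :=
    Metric.uniformContinuousOn_iff.1 (hs.uniformContinuousOn_of_continuous hf) ε hε
  filter_upwards [tendsto_one_div_atTop_nhds_zero_nat.eventually_lt_const hδ]
    with n hn x hx y hy hxy
  simpa only [dist_eq_norm] using (hfδ x hx y hy (hxy.trans_lt hn)).le

variable [NormedSpace ℝ E]

lemma integral_comp_kn_of_cell (F : ℝ → ℝ → E) {n j : ℕ} {s : ℝ} (hn : 0 < n)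
    (hjs : (j : ℝ) / n ≤ s) (hs : s ≤ (j + 1) / n) :
    ∫ r in (j : ℝ) / n..s, F r (kn n r) = ∫ r in (j : ℝ) / n..s, F r (j / n) :=
  intervalIntegral.integral_congr_Ioo_of_le hjs fun r hr => by
    simp only [kn_eq_of_mem_Ico hn ⟨hr.1.le, hr.2.trans_le hs⟩]

lemma tendstoUniformlyOn_integral_zero {w : ℕ → ℝ → E} {a b : ℝ}
    (hw : TendstoUniformlyOn w 0 atTop (Icc a b)) :
    TendstoUniformlyOn (fun n t => ∫ r in a..t, w n r) 0 atTop (Icc a b) := by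
  rw [Metric.tendstoUniformlyOn_iff] at hw ⊢
  intro ε hε
  obtain ⟨η, hη, hηε⟩ := exists_pos_mul_lt hε |b - a|
  filter_upwards [hw η hη] with n hn t ht
  have hbound : ‖∫ r in a..t, w n r‖ ≤ η * |t - a| := by
    refine intervalIntegral.norm_integral_le_of_norm_le_const fun r hr => ?_
    rw [uIoc_of_le ht.1] at hr
    simpa using (hn r ⟨hr.1.le, hr.2.trans ht.2⟩).le
  have hta : |t - a| ≤ |b - a| := abs_le_abs_of_nonneg (sub_nonneg.2 ht.1) (by linarith [ht.2])
  rw [Pi.zero_apply, dist_zero_left]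
  nlinarith

variable [CompleteSpace E]

lemma hasDerivWithinAt_integral_Icc {f : ℝ → E} {a b t : ℝ} (hf : ContinuousOn f (Icc a b))
    (ht : t ∈ Icc a b) :
    HasDerivWithinAt (fun u => ∫ r in a..u, f r) (f t) (Icc a b) t := by
  have : Fact (t ∈ Icc a b) := ⟨ht⟩
  exact intervalIntegral.integral_hasDerivWithinAt_right
    (intervalIntegrable_of_continuousOn_Icc hf (left_mem_Icc.2 (ht.1.trans ht.2)) ht)
    (hf.stronglyMeasurableAtFilter_nhdsWithin measurableSet_Icc t) (hf t ht)

end Calculus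

section Quadrature

variable {E : Type*} [NormedAddCommGroup E] [NormedSpace ℝ E]

/-- The error, at the scale `1 / n`, made by replacing the defect of the left-endpoint rule with
mesh `1 / n` for `∫₀ᵗ g` by its leading term `(g t - g 0) / (2n)`. -/
noncomputable def leftRuleRemainder (g : ℝ → E) (n : ℕ) (t : ℝ) : E :=
  (n : ℝ) • (∫ r in (0 : ℝ)..t, (g r - g (kn n r))) - (1 / 2 : ℝ) • (g t - g 0)

lemma leftRuleRemainder_sub {g : ℝ → E} {T s : ℝ} {n j : ℕ} (hg : ContinuousOn g (Icc 0 T))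
    (hn : 0 < n) (hjs : (j : ℝ) / n ≤ s) (hs : s ≤ (j + 1) / n) (hsT : s ≤ T) :
    leftRuleRemainder g n s - leftRuleRemainder g n (j / n) =
      (n : ℝ) • (∫ r in (j : ℝ) / n..s, (g r - g (j / n))) - (1 / 2 : ℝ) • (g s - g (j / n)) := by
  have hj : (j : ℝ) / n ∈ Icc 0 T := ⟨by positivity, hjs.trans hsT⟩
  have hint {x : ℝ} (hx : x ∈ Icc 0 T) :
      IntervalIntegrable (fun r => g r - g (kn n r)) volume 0 x :=
    (intervalIntegrable_of_continuousOn_Icc hg (left_mem_Icc.2 (hx.1.trans hx.2)) hx).sub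
      (intervalIntegrable_comp_kn g n 0 x)
  rw [← integral_comp_kn_of_cell (fun r u => g r - g u) hn hjs hs,
    ← intervalIntegral.integral_interval_sub_left (hint ⟨hj.1.trans hjs, hsT⟩) (hint hj)]
  simp only [leftRuleRemainder]
  module

lemma norm_leftRuleRemainder_sub_le_of_norm_sub_le {g : ℝ → E} {T s η : ℝ} {n j : ℕ}
    (hg : ContinuousOn g (Icc 0 T)) (hn : 0 < n) (hjs : (j : ℝ) / n ≤ s) (hs : s ≤ (j + 1) / n)
    (hsT : s ≤ T) (hη : ∀ r ∈ Icc ((j : ℝ) / n) s, ‖g r - g (j / n)‖ ≤ η) :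
    ‖leftRuleRemainder g n s - leftRuleRemainder g n (j / n)‖ ≤ 3 / 2 * η := by
  have hη0 : 0 ≤ η := (norm_nonneg _).trans (hη s ⟨hjs, le_rfl⟩)
  have hwidth : n * (s - j / n) ≤ 1 := by
    calc n * (s - j / n) ≤ n * ((j + 1) / n - j / n) := by gcongr
      _ = 1 := by field_simp; ring
  have hint : ‖∫ r in (j : ℝ) / n..s, (g r - g (j / n))‖ ≤ η * (s - j / n) := by
    rw [← abs_of_nonneg (sub_nonneg.2 hjs)]
    refine intervalIntegral.norm_integral_le_of_norm_le_const fun r hr => hη r ?_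
    exact Ioc_subset_Icc_self (uIoc_of_le hjs ▸ hr)
  rw [leftRuleRemainder_sub hg hn hjs hs hsT]
  refine (norm_sub_le _ _).trans ?_
  rw [norm_smul, norm_smul, Real.norm_natCast, Real.norm_of_nonneg (by norm_num)]
  calc n * ‖∫ r in (j : ℝ) / n..s, (g r - g (j / n))‖ + 1 / 2 * ‖g s - g (j / n)‖
      ≤ n * (η * (s - j / n)) + 1 / 2 * η := by gcongr; exact hη s ⟨hjs, le_rfl⟩
    _ = n * (s - j / n) * η + 1 / 2 * η := by ring
    _ ≤ 1 * η + 1 / 2 * η := by gcongr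
    _ = 3 / 2 * η := by ring

variable [CompleteSpace E]

lemma norm_integral_sub_left_sub_trapezoid_le {g g' : ℝ → E} {a b ω : ℝ} (hab : a ≤ b)
    (hg : ∀ t ∈ Icc a b, HasDerivWithinAt g (g' t) (Icc a b) t)
    (hω : ∀ s ∈ Icc a b, ∀ t ∈ Icc a b, ‖g' s - g' t‖ ≤ ω) :
    ‖(∫ r in a..b, (g r - g a)) - ((b - a) / 2) • (g b - g a)‖ ≤ ω / 2 * (b - a) ^ 2 := by
  have ha : a ∈ Icc a b := left_mem_Icc.2 hab
  have hb : b ∈ Icc a b := right_mem_Icc.2 hab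
  have hω0 : 0 ≤ ω := (norm_nonneg _).trans (hω a ha a ha)
  have hgc : ContinuousOn g (Icc a b) := fun t ht => (hg t ht).continuousWithinAt
  -- The derivative of the trapezoid error is half of a first-order Taylor remainder of `g` at `t`.
  have hφ : ∀ t ∈ Icc a b, HasDerivWithinAt
      (fun t => (∫ r in a..t, (g r - g a)) - ((t - a) / 2) • (g t - g a))
      ((1 / 2 : ℝ) • (g t - g a - (t - a) • g' t)) (Icc a b) t := by
    intro t ht
    have hlin : HasDerivWithinAt (fun t => (t - a) / 2) (1 / 2 : ℝ) (Icc a b) t :=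
      (((hasDerivAt_id t).sub_const a).div_const 2).hasDerivWithinAt
    refine ((hasDerivWithinAt_integral_Icc (hgc.sub continuousOn_const) ht).sub
      (hlin.smul ((hg t ht).sub_const (g a)))).congr_deriv ?_
    simp only [Pi.sub_apply]
    module
  have htaylor : ∀ t ∈ Icc a b, ‖g t - g a - (t - a) • g' t‖ ≤ ω * (t - a) := by
    intro t ht
    have hmvt := (convex_Icc a b).norm_image_sub_le_of_norm_hasDerivWithin_le
      (f := fun r => g r - r • g' t) (f' := fun r => g' r - (1 : ℝ) • g' t)
      (fun r hr => (hg r hr).sub ((hasDerivAt_id r).smul_const (g' t)).hasDerivWithinAt)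
      (fun r hr => by simpa only [one_smul] using hω r hr t ht) ha ht
    rw [Real.norm_of_nonneg (sub_nonneg.2 ht.1)] at hmvt
    convert hmvt using 2
    module
  have hφ' : ∀ t ∈ Icc a b, ‖(1 / 2 : ℝ) • (g t - g a - (t - a) • g' t)‖ ≤ ω / 2 * (b - a) := by
    intro t ht
    rw [norm_smul, Real.norm_of_nonneg (by norm_num)]
    calc 1 / 2 * ‖g t - g a - (t - a) • g' t‖ ≤ 1 / 2 * (ω * (b - a)) := by
          gcongr
          exact (htaylor t ht).trans (by gcongr; exact ht.2)
      _ = ω / 2 * (b - a) := by ring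
  have hmvt := (convex_Icc a b).norm_image_sub_le_of_norm_hasDerivWithin_le hφ hφ' ha hb
  simpa [abs_of_nonneg (sub_nonneg.2 hab), pow_two, mul_assoc] using hmvt

lemma norm_leftRuleRemainder_sub_le_of_norm_deriv_sub_le {g g' : ℝ → E} {T ω : ℝ} {n j : ℕ}
    (hg : ∀ t ∈ Icc 0 T, HasDerivWithinAt g (g' t) (Icc 0 T) t) (hn : 0 < n)
    (hjT : ((j : ℝ) + 1) / n ≤ T)
    (hω : ∀ s ∈ Icc 0 T, ∀ t ∈ Icc 0 T, |s - t| ≤ 1 / n → ‖g' s - g' t‖ ≤ ω) :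
    ‖leftRuleRemainder g n ((j + 1) / n) - leftRuleRemainder g n (j / n)‖ ≤ ω / 2 * (1 / n) := by
  have hcell : (j : ℝ) / n ≤ (j + 1) / n := by gcongr; linarith
  have hwidth : ((j : ℝ) + 1) / n - j / n = 1 / n := by ring
  have hsub : Icc ((j : ℝ) / n) ((j + 1) / n) ⊆ Icc 0 T := Icc_subset_Icc (by positivity) hjT
  have hgc : ContinuousOn g (Icc 0 T) := fun t ht => (hg t ht).continuousWithinAt
  have htrap := norm_integral_sub_left_sub_trapezoid_le hcell
    (fun t ht => (hg t (hsub ht)).mono hsub)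
    fun s hs t ht => hω s (hsub hs) t (hsub ht)
      (hwidth ▸ abs_sub_le_of_le_of_le hs.1 hs.2 ht.1 ht.2)
  rw [hwidth] at htrap
  have hscale : (n : ℝ) * (1 / n / 2) = 1 / 2 := by field_simp
  rw [leftRuleRemainder_sub hgc hn hcell le_rfl hjT, ← hscale, mul_smul, ← smul_sub,
    norm_smul, Real.norm_natCast]
  calc _ ≤ n * (ω / 2 * (1 / n) ^ 2) := by gcongr
    _ = ω / 2 * (1 / n) := by field_simp

lemma tendstoUniformlyOn_leftRuleRemainder {g g' : ℝ → E} {T : ℝ}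
    (hg : ∀ t ∈ Icc 0 T, HasDerivWithinAt g (g' t) (Icc 0 T) t)
    (hg' : ContinuousOn g' (Icc 0 T)) :
    TendstoUniformlyOn (leftRuleRemainder g) 0 atTop (Icc 0 T) := by
  have hgc : ContinuousOn g (Icc 0 T) := fun t ht => (hg t ht).continuousWithinAt
  rw [Metric.tendstoUniformlyOn_iff]
  intro ε hε
  obtain ⟨ω, hω, hωT⟩ := exists_pos_mul_lt (half_pos hε) (T / 2)
  filter_upwards [eventually_gt_atTop 0,
    eventually_norm_sub_le_of_abs_sub_le_one_div isCompact_Icc hg' hω,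
    eventually_norm_sub_le_of_abs_sub_le_one_div isCompact_Icc hgc
      (show 0 < ε / 3 by positivity)] with n hn hosc' hosc t ht
  obtain ⟨j, hj⟩ := exists_mem_Ico_div hn ht.1
  have hjT : (j : ℝ) / n ≤ T := hj.1.trans ht.2
  have hgrid : ‖leftRuleRemainder g n (j / n)‖ ≤ ω / 2 * (j / n) := by
    have hsum := dist_le_range_sum_of_dist_le (f := fun i : ℕ => leftRuleRemainder g n (i / n))
      (d := fun _ => ω / 2 * (1 / n)) j fun {i} hi => by
        rw [dist_comm, dist_eq_norm, Nat.cast_add_one]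
        refine norm_leftRuleRemainder_sub_le_of_norm_deriv_sub_le hg hn (le_trans ?_ hjT) hosc'
        gcongr
        exact_mod_cast hi
    rw [Finset.sum_const, Finset.card_range, nsmul_eq_mul] at hsum
    have hzero : leftRuleRemainder g n 0 = 0 := by simp [leftRuleRemainder]
    rw [Nat.cast_zero, zero_div, hzero, dist_zero_left] at hsum
    exact hsum.trans_eq (by ring)
  have hlast : ‖leftRuleRemainder g n t - leftRuleRemainder g n (j / n)‖ ≤ 3 / 2 * (ε / 3) := by
    refine norm_leftRuleRemainder_sub_le_of_norm_sub_le hgc hn hj.1 hj.2.le ht.2 fun r hr => ?_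
    refine hosc r ⟨by linarith [hr.1, show 0 ≤ (j : ℝ) / n by positivity], hr.2.trans ht.2⟩
      _ ⟨by positivity, hjT⟩ ?_
    have hwidth : ((j : ℝ) + 1) / n - j / n = 1 / n := by ring
    rw [abs_of_nonneg (sub_nonneg.2 hr.1), ← hwidth]
    linarith [hr.2, hj.2]
  have hωj : ω / 2 * (j / n) < ε / 2 := by
    calc ω / 2 * (j / n) ≤ ω / 2 * T := by gcongr
      _ < ε / 2 := by linarith
  rw [Pi.zero_apply, dist_zero_left]
  linarith [norm_le_norm_add_norm_sub' (leftRuleRemainder g n t) (leftRuleRemainder g n (j / n))]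

end Quadrature

section LocalLipschitz

variable {E F : Type*} [NormedAddCommGroup E] [NormedSpace ℝ E] [NormedAddCommGroup F]
  [NormedSpace ℝ F] {b : E → F} {Db : E → E →L[ℝ] F} {K : Set E}

lemma exists_norm_sub_sub_fderiv_le_of_isCompact (hb : ∀ x, HasFDerivAt b (Db x) x)
    (hDb : Continuous Db) (hK : IsCompact K) {ε : ℝ} (hε : 0 < ε) :
    ∃ δ > 0, ∀ z ∈ K, ∀ x y, ‖x - z‖ < δ → ‖y - z‖ < δ →
      ‖b x - b y - Db z (x - y)‖ ≤ ε * ‖x - y‖ := by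
  obtain ⟨δ, hδ, hDbδ⟩ := Metric.mem_uniformity_dist.1 <|
    hK.uniformContinuousAt_of_continuousAt Db (fun _ _ => hDb.continuousAt)
      (Metric.dist_mem_uniformity hε)
  refine ⟨δ, hδ, fun z hz x y hx hy =>
    (convex_ball z δ).norm_image_sub_le_of_norm_hasFDerivWithin_le'
      (fun w _ => (hb w).hasFDerivWithinAt) (fun w hw => ?_)
      (mem_ball_iff_norm.2 hy) (mem_ball_iff_norm.2 hx)⟩
  have hzw : dist (Db z) (Db w) < ε := hDbδ (by rw [dist_comm]; exact hw) hz
  rw [dist_comm, dist_eq_norm] at hzw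
  exact hzw.le

lemma exists_norm_sub_le_mul_of_isCompact (hb : ∀ x, HasFDerivAt b (Db x) x)
    (hDb : Continuous Db) (hK : IsCompact K) :
    ∃ L > 0, ∃ δ > 0, ∀ z ∈ K, ∀ y, ‖z - y‖ < δ → ‖b z - b y‖ ≤ L * ‖z - y‖ := by
  obtain ⟨D, hD⟩ := hK.exists_bound_of_continuousOn hDb.continuousOn
  obtain ⟨δ, hδ, hlin⟩ := exists_norm_sub_sub_fderiv_le_of_isCompact hb hDb hK one_pos
  refine ⟨|D| + 1, by positivity, δ, hδ, fun z hz y hy => ?_⟩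
  have hfderiv : ‖Db z (z - y)‖ ≤ |D| * ‖z - y‖ :=
    (Db z).le_of_opNorm_le ((hD z hz).trans (le_abs_self D)) _
  have hrem := hlin z hz z y (by simpa using hδ) (by rwa [norm_sub_rev])
  linarith [norm_le_norm_sub_add (b z - b y) (Db z (z - y))]

end LocalLipschitz

lemma tendstoUniformlyOn_clm_apply {α ι E F : Type*} [NormedAddCommGroup E] [NormedSpace ℝ E]
    [NormedAddCommGroup F] [NormedSpace ℝ F] {A : α → E →L[ℝ] F} {u : ι → α → E} {v : α → E}
    {l : Filter ι} {s : Set α} {D : ℝ} (hA : ∀ x ∈ s, ‖A x‖ ≤ D) (hu : TendstoUniformlyOn u v l s) :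
    TendstoUniformlyOn (fun i x => A x (u i x)) (fun x => A x (v x)) l s := by
  rw [Metric.tendstoUniformlyOn_iff] at hu ⊢
  intro ε hε
  obtain ⟨η, hη, hDη⟩ := exists_pos_mul_lt hε D
  filter_upwards [hu η hη] with i hi x hx
  have hD : 0 ≤ D := (norm_nonneg _).trans (hA x hx)
  have hxη := (hi x hx).le
  rw [dist_eq_norm] at hxη ⊢
  rw [← map_sub]
  calc ‖A x (v x - u i x)‖ ≤ D * ‖v x - u i x‖ := (A x).le_of_opNorm_le (hA x hx) _
    _ ≤ D * η := by gcongr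
    _ < ε := hDη

section Volterra

variable {E : Type*} [NormedAddCommGroup E] [NormedSpace ℝ E] [CompleteSpace E]
  {A : ℝ → E →L[ℝ] E} {T : ℝ}

lemma norm_le_mul_exp_of_norm_sub_integral_le {u : ℝ → E} {L η : ℝ} (hL : 0 < L)
    (hA : ContinuousOn A (Icc 0 T)) (hAL : ∀ t ∈ Icc 0 T, ‖A t‖ ≤ L)
    (hu : ContinuousOn u (Icc 0 T))
    (hη : ∀ t ∈ Icc 0 T, ‖u t - ∫ r in (0 : ℝ)..t, A r (u r)‖ ≤ η) :
    ∀ t ∈ Icc 0 T, ‖u t‖ ≤ η * Real.exp (L * t) := by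
  set v : ℝ → E := fun t => ∫ r in (0 : ℝ)..t, A r (u r)
  have hv : ∀ t ∈ Icc 0 T, HasDerivWithinAt v (A t (u t)) (Icc 0 T) t := fun t ht =>
    hasDerivWithinAt_integral_Icc (hA.clm_apply hu) ht
  have huv : ∀ t ∈ Icc 0 T, ‖u t‖ ≤ ‖v t‖ + η := fun t ht => by
    linarith [norm_le_norm_add_norm_sub' (u t) (v t), hη t ht]
  have hderiv : ∀ t ∈ Ico 0 T, ‖A t (u t)‖ ≤ L * ‖v t‖ + L * η := fun t ht => by
    have ht' := Ico_subset_Icc_self ht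
    rw [← mul_add]
    exact ((A t).le_of_opNorm_le (hAL t ht') _).trans (by gcongr; exact huv t ht')
  intro t ht
  have hgronwall := norm_le_gronwallBound_of_norm_deriv_right_le (δ := 0)
    (fun s hs => (hv s hs).continuousWithinAt)
    (fun s hs => (hv s (Ico_subset_Icc_self hs)).mono_of_mem_nhdsWithin (Icc_mem_nhdsGE_of_mem hs))
    (by simp [v]) hderiv t ht
  simp only [gronwallBound_of_K_ne_0 hL.ne', zero_mul, zero_add, sub_zero,
    mul_div_cancel_left₀ _ hL.ne'] at hgronwall
  linarith [huv t ht]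

lemma uniformCauchySeqOn_of_uniformCauchySeqOn_sub_integral {u : ℕ → ℝ → E}
    (hA : ContinuousOn A (Icc 0 T)) (hu : ∀ᶠ n in atTop, ContinuousOn (u n) (Icc 0 T))
    (hres : UniformCauchySeqOn (fun n t => u n t - ∫ r in (0 : ℝ)..t, A r (u n r)) atTop
      (Icc 0 T)) :
    UniformCauchySeqOn u atTop (Icc 0 T) := by
  obtain ⟨D, hD⟩ := isCompact_Icc.exists_bound_of_continuousOn hA
  set L := |D| + 1
  have hL : 0 < L := by positivity
  have hAL : ∀ t ∈ Icc 0 T, ‖A t‖ ≤ L := fun t ht => by linarith [hD t ht, le_abs_self D]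
  intro V hV
  obtain ⟨ε, hε, hεV⟩ := Metric.mem_uniformity_dist.1 hV
  obtain ⟨η, hη, hηε⟩ := exists_pos_mul_lt hε (Real.exp (L * T))
  filter_upwards [hres _ (Metric.dist_mem_uniformity hη), hu.prod_mk hu]
    with ⟨m, n⟩ hmn ⟨hm, hn⟩ t ht
  have hint {v : ℝ → E} (hv : ContinuousOn v (Icc 0 T)) {s : ℝ} (hs : s ∈ Icc 0 T) :
      IntervalIntegrable (fun r => A r (v r)) volume 0 s :=
    intervalIntegrable_of_continuousOn_Icc (hA.clm_apply hv)
      (left_mem_Icc.2 (hs.1.trans hs.2)) hs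
  have hdiff := norm_le_mul_exp_of_norm_sub_integral_le (η := η) hL hA hAL (hm.sub hn)
    (fun s hs => by
      have hmns := (hmn s hs).le
      rw [dist_eq_norm] at hmns
      simp only [Pi.sub_apply, map_sub]
      rw [intervalIntegral.integral_sub (hint hm hs) (hint hn hs), sub_sub_sub_comm]
      exact hmns) t ht
  refine hεV ?_
  rw [dist_eq_norm]
  calc ‖u m t - u n t‖ ≤ η * Real.exp (L * t) := hdiff
    _ ≤ η * Real.exp (L * T) := by gcongr; exact ht.2
    _ < ε := by rwa [mul_comm]

lemma exists_tendstoUniformlyOn_of_tendstoUniformlyOn_sub_integral {u : ℕ → ℝ → E} {f : ℝ → E}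
    (hA : ContinuousOn A (Icc 0 T)) (hu : ∀ᶠ n in atTop, ContinuousOn (u n) (Icc 0 T))
    (hf : TendstoUniformlyOn (fun n t => u n t - ∫ r in (0 : ℝ)..t, A r (u n r)) f atTop
      (Icc 0 T)) :
    ∃ c : ℝ → E, ContinuousOn c (Icc 0 T) ∧ TendstoUniformlyOn u c atTop (Icc 0 T) ∧
      ∀ t ∈ Icc 0 T, c t = f t + ∫ r in (0 : ℝ)..t, A r (c r) := by
  obtain ⟨D, hD⟩ := isCompact_Icc.exists_bound_of_continuousOn hA
  have hcauchy := uniformCauchySeqOn_of_uniformCauchySeqOn_sub_integral hA hu hf.uniformCauchySeqOn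
  have hlim : ∀ t, ∃ y, t ∈ Icc 0 T → Tendsto (fun n => u n t) atTop (𝓝 y) := fun t => by
    by_cases ht : t ∈ Icc 0 T
    · exact (cauchySeq_tendsto_of_complete (hcauchy.cauchySeq ht)).imp fun _ h _ => h
    · exact ⟨0, fun h => absurd h ht⟩
  choose c hc using hlim
  have huc : TendstoUniformlyOn u c atTop (Icc 0 T) := hcauchy.tendstoUniformlyOn_of_tendsto hc
  have hcc : ContinuousOn c (Icc 0 T) := huc.continuousOn hu.frequently
  refine ⟨c, hcc, huc, fun t ht => ?_⟩
  have hsub : uIcc 0 t ⊆ Icc 0 T := uIcc_subset_Icc (left_mem_Icc.2 (ht.1.trans ht.2)) ht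
  have hAu : TendstoUniformlyOn (fun n r => A r (u n r)) (fun r => A r (c r)) atTop (uIcc 0 t) :=
    (tendstoUniformlyOn_clm_apply hD huc).mono hsub
  have hint := hAu.tendsto_intervalIntegral_of_continuousOn (μ := volume)
    (hu.mono fun n hn => (hA.clm_apply hn).mono hsub)
  exact eq_add_of_sub_eq (tendsto_nhds_unique ((hc t ht).sub hint) (hf.tendsto_at ht))

end Volterra

section EulerScheme

variable {E : Type*} [NormedAddCommGroup E] [NormedSpace ℝ E] {b : E → E} {x₀ : E}
  {B B' X Z : ℝ → E} {T L M δ : ℝ} {n : ℕ}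

/-- `X` is a continuous solution of `X_t = x₀ + ∫₀ᵗ b(X_r) dr + B_t` on `[0, T]`. Continuity is part
of the notion because the integral of a non-integrable function is `0` by convention. -/
structure IsIntegralSolution (b : E → E) (x₀ : E) (B : ℝ → E) (T : ℝ) (X : ℝ → E) : Prop where
  continuousOn : ContinuousOn X (Icc 0 T)
  eq_add : ∀ t ∈ Icc 0 T, X t = x₀ + (∫ r in (0 : ℝ)..t, b (X r)) + B t

/-- `Z` is the Euler scheme of mesh `1 / n` on `[0, T]`, interpolated between grid points by
integrating the drift frozen at the last one and following the driving path `B` itself. -/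
def IsEulerScheme (b : E → E) (x₀ : E) (B : ℝ → E) (T : ℝ) (n : ℕ) (Z : ℝ → E) : Prop :=
  ∀ t ∈ Icc 0 T, Z t = x₀ + (∫ r in (0 : ℝ)..t, b (Z (kn n r))) + B t

lemma IsEulerScheme.continuousOn (hZ : IsEulerScheme b x₀ B T n Z) (hB : ContinuousOn B (Icc 0 T)) :
    ContinuousOn Z (Icc 0 T) :=
  ((continuousOn_const.add (intervalIntegral.continuous_primitive
    (intervalIntegrable_comp_kn (fun u => b (Z u)) n) 0).continuousOn).add hB).congr hZ

lemma isIntegralSolution_of_tendstoUniformlyOn {Xn : ℕ → ℝ → E}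
    (hX : ∀ t ∈ Icc 0 T, X t = x₀ + (∫ r in (0 : ℝ)..t, b (X r)) + B t)
    (hXn : ∀ᶠ n in atTop, IsEulerScheme b x₀ B T n (Xn n)) (hB : ContinuousOn B (Icc 0 T))
    (hlim : TendstoUniformlyOn Xn X atTop (Icc 0 T)) : IsIntegralSolution b x₀ B T X :=
  ⟨hlim.continuousOn (hXn.mono fun _ hn => hn.continuousOn hB).frequently, hX⟩

lemma IsEulerScheme.error_zero (hZ : IsEulerScheme b x₀ B T n Z)
    (hX : IsIntegralSolution b x₀ B T X) (hT : 0 ≤ T) : X 0 - Z 0 = 0 := by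
  have h0 := left_mem_Icc.2 hT
  rw [hX.eq_add 0 h0, hZ 0 h0, intervalIntegral.integral_same, intervalIntegral.integral_same,
    sub_self]

lemma IsEulerScheme.error_sub_error (hZ : IsEulerScheme b x₀ B T n Z)
    (hX : IsIntegralSolution b x₀ B T X) (hb : Continuous b) {s t : ℝ} (hs : s ∈ Icc 0 T)
    (ht : t ∈ Icc 0 T) :
    (X t - Z t) - (X s - Z s) = ∫ r in s..t, (b (X r) - b (Z (kn n r))) := by
  have hbX {u : ℝ} (hu : u ∈ Icc 0 T) : IntervalIntegrable (fun r => b (X r)) volume 0 u :=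
    intervalIntegrable_of_continuousOn_Icc (hb.comp_continuousOn hX.continuousOn)
      (left_mem_Icc.2 (hu.1.trans hu.2)) hu
  have hbZ (u : ℝ) := intervalIntegrable_comp_kn (fun u => b (Z u)) n 0 u
  rw [← intervalIntegral.integral_interval_sub_left ((hbX ht).sub (hbZ t)) ((hbX hs).sub (hbZ s)),
    intervalIntegral.integral_sub (hbX ht) (hbZ t), intervalIntegral.integral_sub (hbX hs) (hbZ s),
    hX.eq_add t ht, hX.eq_add s hs, hZ t ht, hZ s hs]
  abel

lemma IsEulerScheme.add_norm_error_grid_succ_le (hZ : IsEulerScheme b x₀ B T n Z)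
    (hX : IsIntegralSolution b x₀ B T X) (hb : Continuous b) (hn : 0 < n) (hL : 0 ≤ L)
    (hM0 : 0 ≤ M) (hM : ∀ r ∈ Icc 0 T, ∀ s ∈ Icc 0 T, ‖X r - X s‖ ≤ M * |r - s|)
    (hloc : ∀ r ∈ Icc 0 T, ∀ y, ‖X r - y‖ < δ → ‖b (X r) - b y‖ ≤ L * ‖X r - y‖)
    {j : ℕ} (hj : ((j : ℝ) + 1) / n ≤ T) (hδ : M / n + ‖X (j / n) - Z (j / n)‖ < δ) :
    M / n + ‖X ((j + 1) / n) - Z ((j + 1) / n)‖ ≤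
      (M / n + ‖X (j / n) - Z (j / n)‖) * Real.exp (L * (1 / n)) := by
  have hcell : (j : ℝ) / n ≤ (j + 1) / n := by gcongr; linarith
  have hwidth : ((j : ℝ) + 1) / n - j / n = 1 / n := by ring
  have hjT : (j : ℝ) / n ∈ Icc 0 T := ⟨by positivity, hcell.trans hj⟩
  set a := M / n + ‖X (j / n) - Z (j / n)‖ 
  have hclose : ∀ r ∈ Ioc ((j : ℝ) / n) ((j + 1) / n), ‖b (X r) - b (Z (j / n))‖ ≤ L * a := by
    intro r hr
    have hrT : r ∈ Icc 0 T := ⟨hjT.1.trans hr.1.le, hr.2.trans hj⟩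
    have hpath : ‖X r - X (j / n)‖ ≤ M / n :=
      (hM r hrT _ hjT).trans <| by
        rw [abs_of_pos (sub_pos.2 hr.1), div_eq_mul_one_div M, ← hwidth]
        gcongr
        exact hr.2
    have hra : ‖X r - Z (j / n)‖ ≤ a := by
      linarith [norm_sub_le_norm_sub_add_norm_sub (X r) (X (j / n)) (Z (j / n))]
    exact (hloc r hrT _ (hra.trans_lt hδ)).trans (by gcongr)
  have hstep : ‖(X ((j + 1) / n) - Z ((j + 1) / n)) - (X (j / n) - Z (j / n))‖
      ≤ L * a * (1 / n) := by
    rw [hZ.error_sub_error hX hb hjT ⟨by positivity, hj⟩,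
      integral_comp_kn_of_cell (fun r u => b (X r) - b (Z u)) hn hcell le_rfl, ← hwidth,
      ← abs_of_nonneg (sub_nonneg.2 hcell)]
    refine intervalIntegral.norm_integral_le_of_norm_le_const fun r hr => hclose r ?_
    rwa [uIoc_of_le hcell] at hr
  calc M / n + ‖X ((j + 1) / n) - Z ((j + 1) / n)‖ ≤ a + L * a * (1 / n) := by
        linarith [norm_le_norm_add_norm_sub' (X ((j + 1) / n) - Z ((j + 1) / n))
          (X (j / n) - Z (j / n))]
    _ = a * (L * (1 / n) + 1) := by ring
    _ ≤ a * Real.exp (L * (1 / n)) := by gcongr; exact Real.add_one_le_exp _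

-- The induction keeps the scheme in the `δ`-tube around `X`, where `b` satisfies a Lipschitz bound.
lemma IsEulerScheme.add_norm_error_grid_le (hZ : IsEulerScheme b x₀ B T n Z)
    (hX : IsIntegralSolution b x₀ B T X) (hb : Continuous b) (hn : 0 < n) (hL : 0 ≤ L)
    (hM0 : 0 ≤ M) (hM : ∀ r ∈ Icc 0 T, ∀ s ∈ Icc 0 T, ‖X r - X s‖ ≤ M * |r - s|)
    (hloc : ∀ r ∈ Icc 0 T, ∀ y, ‖X r - y‖ < δ → ‖b (X r) - b y‖ ≤ L * ‖X r - y‖)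
    (hδ : M / n * Real.exp (L * T) < δ) {j : ℕ} (hj : (j : ℝ) / n ≤ T) :
    M / n + ‖X (j / n) - Z (j / n)‖ ≤ M / n * Real.exp (L * (j / n)) := by
  induction j with
  | zero =>
    rw [Nat.cast_zero, zero_div] at hj ⊢
    simp [hZ.error_zero hX hj]
  | succ j ih =>
    rw [Nat.cast_add_one] at hj ⊢
    have hjT : (j : ℝ) / n ≤ T := le_trans (by gcongr; linarith) hj
    have hsmall : M / n + ‖X (j / n) - Z (j / n)‖ < δ :=
      ((ih hjT).trans (by gcongr)).trans_lt hδ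
    calc M / n + ‖X ((j + 1) / n) - Z ((j + 1) / n)‖
        ≤ (M / n + ‖X (j / n) - Z (j / n)‖) * Real.exp (L * (1 / n)) :=
          hZ.add_norm_error_grid_succ_le hX hb hn hL hM0 hM hloc hj hsmall
      _ ≤ M / n * Real.exp (L * (j / n)) * Real.exp (L * (1 / n)) := by gcongr; exact ih hjT
      _ = M / n * Real.exp (L * ((j + 1) / n)) := by
        rw [mul_assoc, ← Real.exp_add]
        ring_nf

lemma IsEulerScheme.norm_sub_comp_kn_le (hZ : IsEulerScheme b x₀ B T n Z)
    (hX : IsIntegralSolution b x₀ B T X) (hb : Continuous b) (hn : 0 < n) (hL : 0 ≤ L)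
    (hM0 : 0 ≤ M) (hM : ∀ r ∈ Icc 0 T, ∀ s ∈ Icc 0 T, ‖X r - X s‖ ≤ M * |r - s|)
    (hloc : ∀ r ∈ Icc 0 T, ∀ y, ‖X r - y‖ < δ → ‖b (X r) - b y‖ ≤ L * ‖X r - y‖)
    (hδ : M / n * Real.exp (L * T) < δ) {r : ℝ} (hr : r ∈ Icc 0 T) :
    ‖X r - Z (kn n r)‖ ≤ M / n * Real.exp (L * T) := by
  obtain ⟨j, hj⟩ := exists_mem_Ico_div hn hr.1
  have hkn := kn_eq_of_mem_Ico hn hj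
  have hgrid := hZ.add_norm_error_grid_le hX hb hn hL hM0 hM hloc hδ (hj.1.trans hr.2)
  rw [← hkn] at hgrid
  have hpath : ‖X r - X (kn n r)‖ ≤ M / n :=
    (hM r hr _ (kn_mem_Icc hn hr)).trans <| by
      rw [div_eq_mul_one_div]; gcongr; exact abs_sub_kn_le hn r
  calc ‖X r - Z (kn n r)‖ ≤ ‖X r - X (kn n r)‖ + ‖X (kn n r) - Z (kn n r)‖ :=
        norm_sub_le_norm_sub_add_norm_sub _ _ _
    _ ≤ M / n * Real.exp (L * kn n r) := by linarith
    _ ≤ M / n * Real.exp (L * T) := by gcongr; exact (kn_le hn r).trans hr.2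

variable {Db : E → E →L[ℝ] E} {Xn : ℕ → ℝ → E}

lemma tendstoUniformlyOn_smul_sub_sub_fderiv {K : ℝ} (hXc : ContinuousOn X (Icc 0 T))
    (hb : ∀ x, HasFDerivAt b (Db x) x) (hDb : Continuous Db)
    (hK : ∀ᶠ n : ℕ in atTop, ∀ r ∈ Icc 0 T, ‖X r - Xn n (kn n r)‖ ≤ K / n) :
    TendstoUniformlyOn (fun (n : ℕ) r => (n : ℝ) • (b (X (kn n r)) - b (Xn n (kn n r)) -
      Db (X r) (X (kn n r) - Xn n (kn n r)))) 0 atTop (Icc 0 T) := by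
  rw [Metric.tendstoUniformlyOn_iff]
  intro ε hε
  obtain ⟨η, hη, hKη⟩ := exists_pos_mul_lt hε K
  obtain ⟨δ, hδ, hlin⟩ := exists_norm_sub_sub_fderiv_le_of_isCompact hb hDb
    (isCompact_Icc.image_of_continuousOn hXc) hη
  rw [forall_mem_image] at hlin
  filter_upwards [hK, eventually_gt_atTop 0,
    (tendsto_const_div_atTop_nhds_zero_nat (2 * K)).eventually_lt_const hδ] with n hKn hn hδn r hr
  have herror : ‖X (kn n r) - Xn n (kn n r)‖ ≤ K / n := by
    simpa only [kn_kn hn] using hKn _ (kn_mem_Icc hn hr)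
  have hdouble : 2 * K / n = K / n + K / n := by ring
  have hXr : ‖X (kn n r) - X r‖ < δ := by
    have htri := norm_sub_le_norm_sub_add_norm_sub (X (kn n r)) (Xn n (kn n r)) (X r)
    rw [norm_sub_rev (Xn n (kn n r))] at htri
    linarith [hKn r hr]
  have hZr : ‖Xn n (kn n r) - X r‖ < δ := by
    rw [norm_sub_rev]
    linarith [hKn r hr, norm_nonneg (X r - Xn n (kn n r))]
  rw [Pi.zero_apply, dist_zero_left, norm_smul, Real.norm_natCast]
  calc _ ≤ n * (η * (K / n)) := by
        gcongr
        exact (hlin hr _ _ hXr hZr).trans (by gcongr)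
    _ = K * η := by field_simp
    _ < ε := hKη

lemma tendstoUniformlyOn_smul_error_sub_error {C : ℝ} (hX : IsIntegralSolution b x₀ B T X)
    (hXn : ∀ᶠ n in atTop, IsEulerScheme b x₀ B T n (Xn n)) (hb : Continuous b)
    (hC : ∀ᶠ n : ℕ in atTop, ∀ r ∈ Icc 0 T, ‖b (X r) - b (Xn n (kn n r))‖ ≤ C / n) :
    TendstoUniformlyOn (fun (n : ℕ) r => (n : ℝ) •
      ((X r - Xn n r) - (X (kn n r) - Xn n (kn n r)))) 0 atTop (Icc 0 T) := by
  rw [Metric.tendstoUniformlyOn_iff]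
  intro ε hε
  filter_upwards [hXn, hC, eventually_gt_atTop 0,
    (tendsto_const_div_atTop_nhds_zero_nat C).eventually_lt_const hε] with n hZ hCn hn hεn r hr
  have hkn := kn_mem_Icc hn hr
  have hC0 : 0 ≤ C / n := (norm_nonneg _).trans (hCn r hr)
  rw [Pi.zero_apply, dist_zero_left, norm_smul, Real.norm_natCast,
    hZ.error_sub_error hX hb hkn hr]
  calc _ ≤ n * (C / n * |r - kn n r|) := by
        gcongr
        refine intervalIntegral.norm_integral_le_of_norm_le_const fun s hs => hCn s ?_
        exact uIcc_subset_Icc hkn hr (uIoc_subset_uIcc hs)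
    _ ≤ n * (C / n * (1 / n)) := by gcongr; exact abs_sub_kn_le hn r
    _ = C / n := by field_simp
    _ < ε := hεn

lemma IsEulerScheme.smul_error_sub_integral_eq (hZ : IsEulerScheme b x₀ B T n Z)
    (hX : IsIntegralSolution b x₀ B T X) (hb : Continuous b) (hDb : Continuous Db)
    (hB : ContinuousOn B (Icc 0 T)) {t : ℝ} (ht : t ∈ Icc 0 T) :
    (n : ℝ) • (X t - Z t) - ∫ r in (0 : ℝ)..t, Db (X r) ((n : ℝ) • (X r - Z r)) =
      leftRuleRemainder (fun r => b (X r)) n t +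
        (∫ r in (0 : ℝ)..t, ((n : ℝ) • (b (X (kn n r)) - b (Z (kn n r))) -
          Db (X r) ((n : ℝ) • (X r - Z r)))) +
        (1 / 2 : ℝ) • (b (X t) - b (X 0)) := by
  have h0 : (0 : ℝ) ∈ Icc 0 T := left_mem_Icc.2 (ht.1.trans ht.2)
  have hbX : IntervalIntegrable (fun r => b (X r)) volume 0 t :=
    intervalIntegrable_of_continuousOn_Icc (hb.comp_continuousOn hX.continuousOn) h0 ht
  have hbXkn := intervalIntegrable_comp_kn (fun u => b (X u)) n 0 t
  have hbZkn := intervalIntegrable_comp_kn (fun u => b (Z u)) n 0 t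
  have hlin : IntervalIntegrable (fun r => Db (X r) ((n : ℝ) • (X r - Z r))) volume 0 t :=
    intervalIntegrable_of_continuousOn_Icc ((hDb.comp_continuousOn hX.continuousOn).clm_apply
      ((hX.continuousOn.sub (hZ.continuousOn hB)).const_smul (n : ℝ))) h0 ht
  have herror := hZ.error_sub_error hX hb h0 ht
  rw [hZ.error_zero hX h0.2, sub_zero] at herror
  have hsplit : ∫ r in (0 : ℝ)..t, (b (X r) - b (Z (kn n r))) =
      (∫ r in (0 : ℝ)..t, (b (X r) - b (X (kn n r)))) +
        ∫ r in (0 : ℝ)..t, (b (X (kn n r)) - b (Z (kn n r))) := by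
    rw [← intervalIntegral.integral_add (hbX.sub hbXkn) (hbXkn.sub hbZkn)]
    simp only [sub_add_sub_cancel]
  have hdrift : IntervalIntegrable (fun r => (n : ℝ) • (b (X (kn n r)) - b (Z (kn n r))))
      volume 0 t := (hbXkn.sub hbZkn).smul (n : ℝ)
  rw [intervalIntegral.integral_sub hdrift hlin, intervalIntegral.integral_smul, herror, hsplit,
    leftRuleRemainder]
  module

variable [CompleteSpace E]

lemma IsIntegralSolution.hasDerivWithinAt (hX : IsIntegralSolution b x₀ B T X) (hb : Continuous b)
    (hB : ∀ t ∈ Icc 0 T, HasDerivWithinAt B (B' t) (Icc 0 T) t) {t : ℝ} (ht : t ∈ Icc 0 T) :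
    HasDerivWithinAt X (b (X t) + B' t) (Icc 0 T) t :=
  (((hasDerivWithinAt_integral_Icc (hb.comp_continuousOn hX.continuousOn) ht).const_add x₀).add
    (hB t ht)).congr hX.eq_add (hX.eq_add t ht)

lemma IsIntegralSolution.exists_norm_sub_le_mul_abs (hX : IsIntegralSolution b x₀ B T X)
    (hb : Continuous b) (hB : ∀ t ∈ Icc 0 T, HasDerivWithinAt B (B' t) (Icc 0 T) t)
    (hB' : ContinuousOn B' (Icc 0 T)) :
    ∃ M ≥ 0, ∀ r ∈ Icc 0 T, ∀ s ∈ Icc 0 T, ‖X r - X s‖ ≤ M * |r - s| := by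
  obtain ⟨M, hM⟩ := isCompact_Icc.exists_bound_of_continuousOn
    ((hb.comp_continuousOn hX.continuousOn).add hB')
  exact ⟨|M|, abs_nonneg M, fun r hr s hs =>
    (convex_Icc 0 T).norm_image_sub_le_of_norm_hasDerivWithin_le
      (fun _ ht => hX.hasDerivWithinAt hb hB ht)
      (fun t ht => (hM t ht).trans (le_abs_self M)) hs hr⟩

lemma IsIntegralSolution.exists_eventually_norm_sub_comp_kn_le
    (hX : IsIntegralSolution b x₀ B T X) (hXn : ∀ᶠ n in atTop, IsEulerScheme b x₀ B T n (Xn n))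
    (hb : ∀ x, HasFDerivAt b (Db x) x) (hDb : Continuous Db)
    (hB : ∀ t ∈ Icc 0 T, HasDerivWithinAt B (B' t) (Icc 0 T) t)
    (hB' : ContinuousOn B' (Icc 0 T)) :
    ∃ K C : ℝ, ∀ᶠ n : ℕ in atTop, ∀ r ∈ Icc 0 T, ‖X r - Xn n (kn n r)‖ ≤ K / n ∧
      ‖b (X r) - b (Xn n (kn n r))‖ ≤ C / n := by
  have hbc : Continuous b := continuous_iff_continuousAt.2 fun x => (hb x).continuousAt
  obtain ⟨M, hM0, hM⟩ := hX.exists_norm_sub_le_mul_abs hbc hB hB'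
  obtain ⟨L, hL, δ, hδ, hloc⟩ := exists_norm_sub_le_mul_of_isCompact hb hDb
    (isCompact_Icc.image_of_continuousOn hX.continuousOn)
  rw [forall_mem_image] at hloc
  set K := M * Real.exp (L * T)
  refine ⟨K, L * K, ?_⟩
  filter_upwards [hXn, eventually_gt_atTop 0,
    (tendsto_const_div_atTop_nhds_zero_nat K).eventually_lt_const hδ] with n hZ hn hKδ r hr
  have hK : K / n = M / n * Real.exp (L * T) := by simp only [K]; ring
  have hclose : ‖X r - Xn n (kn n r)‖ ≤ K / n :=
    hK ▸ hZ.norm_sub_comp_kn_le hX hbc hn hL.le hM0 hM hloc (hK ▸ hKδ) hr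
  refine ⟨hclose, (hloc hr _ (hclose.trans_lt hKδ)).trans ?_⟩
  rw [mul_div_assoc]
  gcongr

lemma IsIntegralSolution.tendstoUniformlyOn_smul_drift_sub_linearization
    (hX : IsIntegralSolution b x₀ B T X) (hXn : ∀ᶠ n in atTop, IsEulerScheme b x₀ B T n (Xn n))
    (hb : ∀ x, HasFDerivAt b (Db x) x) (hDb : Continuous Db)
    (hB : ∀ t ∈ Icc 0 T, HasDerivWithinAt B (B' t) (Icc 0 T) t)
    (hB' : ContinuousOn B' (Icc 0 T)) :
    TendstoUniformlyOn (fun (n : ℕ) r => (n : ℝ) • (b (X (kn n r)) - b (Xn n (kn n r))) -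
      Db (X r) ((n : ℝ) • (X r - Xn n r))) 0 atTop (Icc 0 T) := by
  have hbc : Continuous b := continuous_iff_continuousAt.2 fun x => (hb x).continuousAt
  obtain ⟨K, C, hKC⟩ := hX.exists_eventually_norm_sub_comp_kn_le hXn hb hDb hB hB'
  obtain ⟨D, hD⟩ := isCompact_Icc.exists_bound_of_continuousOn
    (hDb.comp_continuousOn hX.continuousOn)
  have hgrid := tendstoUniformlyOn_smul_sub_sub_fderiv hX.continuousOn hb hDb
    (hKC.mono fun _ h r hr => (h r hr).1)
  have hcell := tendstoUniformlyOn_clm_apply hD <|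
    tendstoUniformlyOn_smul_error_sub_error hX hXn hbc (hKC.mono fun _ h r hr => (h r hr).2)
  refine ((hgrid.sub hcell).congr (Eventually.of_forall fun n r _ => ?_)).congr_right fun r _ => ?_
  · simp only [Pi.sub_apply, Function.comp_apply, map_smul, map_sub]
    module
  · simp

lemma IsIntegralSolution.tendstoUniformlyOn_smul_error_sub_integral
    (hX : IsIntegralSolution b x₀ B T X) (hXn : ∀ᶠ n in atTop, IsEulerScheme b x₀ B T n (Xn n))
    (hb : ∀ x, HasFDerivAt b (Db x) x) (hDb : Continuous Db)
    (hB : ∀ t ∈ Icc 0 T, HasDerivWithinAt B (B' t) (Icc 0 T) t)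
    (hB' : ContinuousOn B' (Icc 0 T)) :
    TendstoUniformlyOn (fun (n : ℕ) t => (n : ℝ) • (X t - Xn n t) -
        ∫ r in (0 : ℝ)..t, Db (X r) ((n : ℝ) • (X r - Xn n r)))
      (fun t => (1 / 2 : ℝ) • (b (X t) - b (X 0))) atTop (Icc 0 T) := by
  have hbc : Continuous b := continuous_iff_continuousAt.2 fun x => (hb x).continuousAt
  have hbX : ContinuousOn (fun r => b (X r)) (Icc 0 T) := hbc.comp_continuousOn hX.continuousOn
  have hquad : TendstoUniformlyOn (leftRuleRemainder fun r => b (X r)) 0 atTop (Icc 0 T) :=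
    tendstoUniformlyOn_leftRuleRemainder
      (fun t ht => (hb (X t)).comp_hasDerivWithinAt t (hX.hasDerivWithinAt hbc hB ht))
      ((hDb.comp_continuousOn hX.continuousOn).clm_apply (hbX.add hB'))
  have hlin := tendstoUniformlyOn_integral_zero <|
    hX.tendstoUniformlyOn_smul_drift_sub_linearization hXn hb hDb hB hB'
  have hconst : TendstoUniformlyOn (fun (_ : ℕ) t => (1 / 2 : ℝ) • (b (X t) - b (X 0)))
      (fun t => (1 / 2 : ℝ) • (b (X t) - b (X 0))) atTop (Icc 0 T) :=
    fun _ hV => Eventually.of_forall fun _ _ _ => refl_mem_uniformity hV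
  have hBc : ContinuousOn B (Icc 0 T) := fun t ht => (hB t ht).continuousWithinAt
  refine (((hquad.add hlin).add hconst).congr ?_).congr_right fun t _ => by simp
  filter_upwards [hXn] with n hZ t ht
  exact (hZ.smul_error_sub_integral_eq hX hbc hDb hBc ht).symm

theorem euler_maruyama_rate_optimality_general (hT : 0 ≤ T)
    (hb : ∀ x, HasFDerivAt b (Db x) x) (hDb : Continuous Db)
    (hB : ∀ t ∈ Icc 0 T, HasDerivWithinAt B (B' t) (Icc 0 T) t)
    (hB' : ContinuousOn B' (Icc 0 T)) (hX : IsIntegralSolution b x₀ B T X)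
    (hXn : ∀ᶠ n in atTop, IsEulerScheme b x₀ B T n (Xn n)) :
    ∃ c : ℝ → E, c 0 = 0 ∧
      TendstoUniformlyOn (fun (n : ℕ) t => (n : ℝ) • (X t - Xn n t)) c atTop (Icc 0 T) ∧
      ∀ t ∈ Icc 0 T, HasDerivWithinAt c
        (Db (X t) (c t) + (1 / 2 : ℝ) • Db (X t) (b (X t) + B' t)) (Icc 0 T) t := by
  have hbc : Continuous b := continuous_iff_continuousAt.2 fun x => (hb x).continuousAt
  have hBc : ContinuousOn B (Icc 0 T) := fun t ht => (hB t ht).continuousWithinAt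
  have hA : ContinuousOn (fun t => Db (X t)) (Icc 0 T) := hDb.comp_continuousOn hX.continuousOn
  obtain ⟨c, hcc, hlim, hc⟩ := exists_tendstoUniformlyOn_of_tendstoUniformlyOn_sub_integral hA
    (hXn.mono fun n hZ => (hX.continuousOn.sub (hZ.continuousOn hBc)).const_smul (n : ℝ))
    (hX.tendstoUniformlyOn_smul_error_sub_integral hXn hb hDb hB hB')
  refine ⟨c, by simp [hc 0 (left_mem_Icc.2 hT)], hlim, fun t ht => ?_⟩
  have hbX : HasDerivWithinAt (fun t => b (X t)) (Db (X t) (b (X t) + B' t)) (Icc 0 T) t :=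
    (hb (X t)).comp_hasDerivWithinAt t (hX.hasDerivWithinAt hbc hB ht)
  rw [add_comm]
  exact (((hbX.sub_const (b (X 0))).const_smul (1 / 2 : ℝ)).add
    (hasDerivWithinAt_integral_Icc (hA.clm_apply hcc) ht)).congr hc (hc t ht)

end EulerScheme

/-- **Optimality of the rate `n⁻¹`** (Theorem 5.1): if `b ∈ C¹` (bounded with bounded
continuous derivative `∇b`), `x₀^n = x₀`, the driving path is a.s. continuously
differentiable with `ε'`-Hölder derivative `B'`, and `X^n → X` a.s. uniformly on `[0,1]`,
then a.s. the limit `c(t) := lim_n n (X_t - X^n_t)` exists for every `t ∈ [0,1]` and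
satisfies `c'(t) = ∇b(X_t) c(t) + (1/2) ∇b(X_t)(b(X_t) + B'_t)`, `c(0) = 0`. -/
theorem euler_maruyama_rate_optimality
    {Ω : Type*} {m0 : MeasurableSpace Ω} (P : Measure Ω) [IsProbabilityMeasure P]
    (d : ℕ)
    -- drift `b ∈ C¹`: bounded, with bounded continuous derivative `Db = ∇b`
    (b : Euc d → Euc d) (Db : Euc d → (Euc d →L[ℝ] Euc d)) (Cb : ℝ)
    (hb_deriv : ∀ x, HasFDerivAt b (Db x) x)
    (hDb_cont : Continuous Db)
    (hb_bdd : ∀ x, ‖b x‖ ≤ Cb) (hDb_bdd : ∀ x, ‖Db x‖ ≤ Cb)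
    -- the driving path `B` is a.s. `C¹` with `ε'`-Hölder derivative `B'`
    (B B' : ℝ → Ω → Euc d) (ε' : ℝ) (hε' : 0 < ε')
    (hB_smooth : ∀ᵐ ω ∂P,
      (∀ t : ℝ, HasDerivAt (fun u => B u ω) (B' t ω) t) ∧
      ∃ C : ℝ, ∀ s ∈ Icc (0:ℝ) 1, ∀ t ∈ Icc (0:ℝ) 1,
        ‖B' t ω - B' s ω‖ ≤ C * |t - s| ^ ε')
    -- `X` solves `X_t = x₀ + ∫₀^t b(X_r) dr + B_t` on `[0,1]`
    (x₀ : Euc d) (X : ℝ → Ω → Euc d) (Xn : ℕ → ℝ → Ω → Euc d)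
    (hX : ∀ᵐ ω ∂P, ∀ t ∈ Icc (0:ℝ) 1,
      X t ω = x₀ + (∫ r in (0:ℝ)..t, b (X r ω)) + B t ω)
    -- `X^n` is the Euler–Maruyama scheme with the same initial value `x₀^n = x₀`
    (hXn : ∀ n : ℕ, 0 < n → ∀ᵐ ω ∂P, ∀ t ∈ Icc (0:ℝ) 1,
      Xn n t ω = x₀ + (∫ r in (0:ℝ)..t, b (Xn n (kn n r) ω)) + B t ω)
    -- `X^n → X` a.s. uniformly on `[0,1]`
    (hconv : ∀ᵐ ω ∂P,
      TendstoUniformlyOn (fun n t => Xn n t ω) (fun t => X t ω) atTop (Icc (0:ℝ) 1)) :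
    ∀ᵐ ω ∂P, ∃ cLim : ℝ → Euc d,
      -- `c(0) = 0`
      cLim 0 = 0 ∧
      -- the limit `c(t) = lim_n n (X_t - X^n_t)` exists for every `t ∈ [0,1]`
      (∀ t ∈ Icc (0:ℝ) 1,
        Tendsto (fun n : ℕ => (n : ℝ) • (X t ω - Xn n t ω)) atTop (nhds (cLim t))) ∧
      -- and `c` solves `c'(t) = ∇b(X_t) c(t) + (1/2) ∇b(X_t)(b(X_t) + B'_t)`
      (∀ t ∈ Icc (0:ℝ) 1,
        HasDerivWithinAt cLim
          (Db (X t ω) (cLim t) + (1/2 : ℝ) • Db (X t ω) (b (X t ω) + B' t ω))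
          (Icc (0:ℝ) 1) t) := by
  filter_upwards [hB_smooth, hX, ae_all_iff.2 fun n => ae_all_iff.2 (hXn n), hconv]
    with ω ⟨hB, _, hHölder⟩ hXω hXnω hlim
  have hBc : ContinuousOn (fun t => B t ω) (Icc 0 1) :=
    fun t _ => (hB t).continuousAt.continuousWithinAt
  have hEuler : ∀ᶠ n in atTop, IsEulerScheme b x₀ (fun t => B t ω) 1 n (fun t => Xn n t ω) :=
    (eventually_gt_atTop 0).mono hXnω
  obtain ⟨c, hc0, hc, hderiv⟩ := euler_maruyama_rate_optimality_general zero_le_one hb_deriv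
    hDb_cont (fun t _ => (hB t).hasDerivWithinAt) (continuousOn_of_norm_sub_le_rpow hε' hHölder)
    (isIntegralSolution_of_tendstoUniformlyOn hXω hEuler hBc hlim) hEuler
  exact ⟨c, hc0, fun t ht => hc.tendsto_at ht, hderiv⟩
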